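/- For i indexing the following critical offspring distributions — Φ_{1,m}(t) = ((m−1+t)/m)^m for integers m ≥ 2, Φ_2(t) = e^{t−1}, Φ_3(t) = (1+t²)/2, Φ_4(t) = 1/(2−t), Φ_{5,m}(t) = (m−1+t^m)/m for integers m ≥ 3 — let μ_i(α) = ∑_{n≥1} n^α q_n^{(i)} and μ_i′ = ∑_{n≥1} q_n^{(i)} log n, where (q_n^{(i)}) are the corresponding tree-size probabilities. Then: (i) for every real α < 0, μ_{1,m}(α) is strictly increasing in m ≥ 2, μ_{5,m}(α) is strictly increasing in m ≥ 3, and μ_{1,m}(α) < μ_2(α) < μ_3(α) < μ_4(α) < μ_{5,3}(α) for every m ≥ 2; (ii) for every real α with 0 < α < 1/2 all these orderings are reversed; (iii) μ_{1,m}′ is strictly decreasing in m ≥ 2, μ_{5,m}′ is strictly decreasing in m ≥ 3, and μ_{1,m}′ > μ_2′ > μ_3′ > μ_4′ > μ_{5,3}′ for every m ≥ 2. -/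

import Mathlib

/-- `q` is the tree-size distribution of the critical Galton–Watson tree whose offspring
pgf is `Φ`: `q` has zero constant term, nonnegative entries summing to `1`, and its
generating function `y(z) = ∑ q_n z^n` satisfies `y(z) = z·Φ(y(z))` on `[0,1]`. -/
def IsTreeSizeDist (Φ : ℝ → ℝ) (q : ℕ → ℝ) : Prop :=
  q 0 = 0 ∧ (∀ n, 0 ≤ q n) ∧ (∑' n, q n) = 1 ∧
    ∀ z ∈ Set.Icc (0:ℝ) 1, (∑' n, q n * z ^ n) = z * Φ (∑' n, q n * z ^ n)

/-- `μ(α) = ∑ n^α q_n`. -/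
noncomputable def muPow (q : ℕ → ℝ) (α : ℝ) : ℝ := ∑' n : ℕ, (n : ℝ) ^ α * q n

/-- `μ' = ∑ q_n log n`. -/
noncomputable def muLog (q : ℕ → ℝ) : ℝ := ∑' n : ℕ, q n * Real.log n

open MeasureTheory Set

/-- The integral of `s ^ (α - 1)` over `[1, n]`. -/
noncomputable def powPrimitive (α : ℝ) (n : ℕ) : ℝ := ∫ s in (1:ℝ)..n, s ^ (α - 1)

/-- The tree-size generating function. -/
noncomputable def treeGF (q : ℕ → ℝ) (z : ℝ) : ℝ := ∑' n, q n * z ^ n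

lemma powPrimitive_of_ne_zero {α : ℝ} (hα : α ≠ 0) {n : ℕ} (hn : 1 ≤ n) :
    powPrimitive α n = ((n : ℝ) ^ α - 1) / α := by
  have h1 : (1:ℝ) ≤ n := by exact_mod_cast hn
  rw [powPrimitive, integral_rpow]
  · simp
  · right
    refine ⟨fun h => hα (by linarith), ?_⟩
    rw [uIcc_of_le h1]
    rintro ⟨h, -⟩
    linarith

lemma powPrimitive_zero {n : ℕ} (hn : 1 ≤ n) : powPrimitive 0 n = Real.log n := by
  have h1 : (1:ℝ) ≤ n := by exact_mod_cast hn
  have : ∀ s : ℝ, s ^ ((0:ℝ) - 1) = s⁻¹ := fun s => by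
    rw [zero_sub, Real.rpow_neg_one]
  rw [powPrimitive]
  simp_rw [this]
  rw [integral_inv]
  · simp
  · rw [uIcc_of_le h1]
    rintro ⟨h, -⟩
    linarith

lemma powPrimitive_nonneg (α : ℝ) {n : ℕ} (hn : 1 ≤ n) : 0 ≤ powPrimitive α n := by
  have h1 : (1:ℝ) ≤ n := by exact_mod_cast hn
  apply intervalIntegral.integral_nonneg h1
  intro s hs
  exact Real.rpow_nonneg (by linarith [hs.1]) _

lemma ofReal_exp_sub_exp_mul_rpow {α x : ℝ} (hx : 0 < x) {n : ℕ} (hn : 1 ≤ n) :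
    ENNReal.ofReal ((Real.exp (-x) - Real.exp (-x) ^ n) * x ^ (-α - 1)) =
      ∫⁻ s in Ioc (1:ℝ) n, ENNReal.ofReal (x ^ (-α) * Real.exp (-(s * x))) := by
  have h1 : (1:ℝ) ≤ n := by exact_mod_cast hn
  have hcont : Continuous fun s : ℝ => x ^ (-α) * Real.exp (-(s * x)) := by fun_prop
  rw [← ofReal_integral_eq_lintegral_ofReal, ← intervalIntegral.integral_of_le h1]
  · congr 1
    have hd : ∀ s ∈ uIcc (1:ℝ) n, HasDerivAt
        (fun s : ℝ => -(x ^ (-α - 1)) * Real.exp (-(s * x)))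
        (x ^ (-α) * Real.exp (-(s * x))) s := by
      intro s _
      have h := (((hasDerivAt_id s).mul_const x).neg.exp).const_mul (-(x ^ (-α - 1)))
      refine h.congr_deriv ?_
      have : x ^ (-α) = x ^ (-α - 1) * x := by
        rw [Real.rpow_sub_one hx.ne']
        field_simp
      rw [this]
      simp
      ring
    rw [intervalIntegral.integral_eq_sub_of_hasDerivAt hd (hcont.intervalIntegrable _ _),
      ← Real.exp_nat_mul]
    simp
    ring
  · exact (hcont.integrableOn_Icc).mono_set Ioc_subset_Icc_self
  · filter_upwards with s
    positivity

lemma lintegral_exp_sub_exp_mul_rpow {α : ℝ} (hα : α < 1) {n : ℕ} (hn : 1 ≤ n) :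
    ∫⁻ x in Ioi (0:ℝ), ENNReal.ofReal ((Real.exp (-x) - Real.exp (-x) ^ n) * x ^ (-α - 1)) =
      ENNReal.ofReal (Real.Gamma (1 - α) * powPrimitive α n) := by
  have h1 : (1:ℝ) ≤ n := by exact_mod_cast hn
  have hG : 0 < Real.Gamma (1 - α) := Real.Gamma_pos_of_pos (by linarith)
  rw [setLIntegral_congr_fun measurableSet_Ioi
    (fun x hx => ofReal_exp_sub_exp_mul_rpow (α := α) hx hn)]
  rw [lintegral_lintegral_swap (by fun_prop)]
  have hin : ∀ s ∈ Ioc (1:ℝ) n, ∫⁻ x in Ioi (0:ℝ),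
      ENNReal.ofReal (x ^ (-α) * Real.exp (-(s * x))) =
        ENNReal.ofReal (Real.Gamma (1 - α) * s ^ (α - 1)) := by
    intro s hs
    have hs0 : 0 < s := by linarith [hs.1]
    have hI := Real.integral_rpow_mul_exp_neg_mul_Ioi (a := 1 - α) (r := s) (by linarith) hs0
    have e : 1 - α - 1 = -α := by ring
    rw [e] at hI
    have hR : 0 < (1 / s) ^ (1 - α) * Real.Gamma (1 - α) := by positivity
    rw [← ofReal_integral_eq_lintegral_ofReal, hI]
    · congr 1
      rw [mul_comm, one_div, Real.inv_rpow hs0.le, ← Real.rpow_neg hs0.le]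
      congr 2
      ring
    · by_contra hni
      rw [integral_undef hni] at hI
      linarith
    · filter_upwards [self_mem_ae_restrict measurableSet_Ioi] with x hx
      have : 0 < x := hx
      positivity
  rw [setLIntegral_congr_fun measurableSet_Ioc hin, ← ofReal_integral_eq_lintegral_ofReal,
    ← intervalIntegral.integral_of_le h1, intervalIntegral.integral_const_mul]
  · rfl
  · have hc : ContinuousOn (fun s : ℝ => Real.Gamma (1 - α) * s ^ (α - 1)) (Icc 1 n) := by
      apply continuousOn_const.mul
      exact continuousOn_id.rpow_const fun s hs => Or.inl (by
        have := hs.1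
        simp only [id]
        linarith)
    exact hc.integrableOn_Icc.mono_set Ioc_subset_Icc_self
  · filter_upwards [self_mem_ae_restrict measurableSet_Ioc] with s hs
    have : 0 < s := by linarith [hs.1]
    positivity

section TreeSize

variable {Φ Ψ : ℝ → ℝ} {p q : ℕ → ℝ}

lemma IsTreeSizeDist.summable (h : IsTreeSizeDist Φ q) : Summable q := by
  by_contra hs
  have := h.2.2.1
  rw [tsum_eq_zero_of_not_summable hs] at this
  norm_num at this

lemma IsTreeSizeDist.summable_mul_pow (h : IsTreeSizeDist Φ q) {z : ℝ} (hz : z ∈ Icc (0:ℝ) 1) :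
    Summable fun n => q n * z ^ n :=
  h.summable.of_nonneg_of_le (fun n => mul_nonneg (h.2.1 n) (pow_nonneg hz.1 n))
    fun n => mul_le_of_le_one_right (h.2.1 n) (pow_le_one₀ hz.1 hz.2)

lemma IsTreeSizeDist.treeGF_nonneg (h : IsTreeSizeDist Φ q) {z : ℝ} (hz : z ∈ Icc (0:ℝ) 1) :
    0 ≤ treeGF q z :=
  tsum_nonneg fun n => mul_nonneg (h.2.1 n) (pow_nonneg hz.1 n)

lemma IsTreeSizeDist.mul_pow_le (h : IsTreeSizeDist Φ q) {z : ℝ} (hz : z ∈ Icc (0:ℝ) 1) (n : ℕ) :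
    q n * z ^ n ≤ q n * z := by
  rcases Nat.eq_zero_or_pos n with rfl | hn
  · simp [h.1]
  · exact mul_le_mul_of_nonneg_left (pow_le_of_le_one hz.1 hz.2 hn.ne') (h.2.1 n)

lemma IsTreeSizeDist.treeGF_le (h : IsTreeSizeDist Φ q) {z : ℝ} (hz : z ∈ Icc (0:ℝ) 1) :
    treeGF q z ≤ z := by
  calc treeGF q z ≤ ∑' n, q n * z :=
        (h.summable_mul_pow hz).tsum_le_tsum (h.mul_pow_le hz) (h.summable.mul_right z)
    _ = z := by rw [tsum_mul_right, h.2.2.1, one_mul]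

lemma IsTreeSizeDist.treeGF_eq (h : IsTreeSizeDist Φ q) {z : ℝ} (hz : z ∈ Icc (0:ℝ) 1) :
    treeGF q z = z * Φ (treeGF q z) := h.2.2.2 z hz

/-- The weighted Laplace-type integrand associated with a tree-size distribution. -/
noncomputable def sizeIntegrand (q : ℕ → ℝ) (α x : ℝ) : ENNReal :=
  ∑' n, ENNReal.ofReal (q n) *
    ENNReal.ofReal ((Real.exp (-x) - Real.exp (-x) ^ n) * x ^ (-α - 1))

lemma measurable_sizeIntegrand (q : ℕ → ℝ) (α : ℝ) : Measurable (sizeIntegrand q α) :=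
  Measurable.tsum fun n => by fun_prop

lemma exp_neg_mem_Icc {x : ℝ} (hx : 0 < x) : Real.exp (-x) ∈ Icc (0:ℝ) 1 :=
  ⟨(Real.exp_pos _).le, Real.exp_le_one_iff.2 (by linarith)⟩

lemma IsTreeSizeDist.sizeIntegrand_eq (h : IsTreeSizeDist Φ q) (α : ℝ) {x : ℝ} (hx : 0 < x) :
    sizeIntegrand q α x =
      ENNReal.ofReal ((Real.exp (-x) - treeGF q (Real.exp (-x))) * x ^ (-α - 1)) := by
  have hz := exp_neg_mem_Icc hx
  set z := Real.exp (-x)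
  have hs := h.summable_mul_pow hz
  have hw : 0 ≤ x ^ (-α - 1) := Real.rpow_nonneg hx.le _
  have hsum : HasSum (fun n => q n * ((z - z ^ n) * x ^ (-α - 1)))
      ((z - treeGF q z) * x ^ (-α - 1)) := by
    have h1 := ((h.summable.hasSum.mul_right z).sub hs.hasSum).mul_right (x ^ (-α - 1))
    rw [h.2.2.1, one_mul] at h1
    exact (funext fun n => by ring :
      (fun n => (q n * z - q n * z ^ n) * x ^ (-α - 1)) =
        fun n => q n * ((z - z ^ n) * x ^ (-α - 1))) ▸ h1
  rw [← hsum.tsum_eq, ENNReal.ofReal_tsum_of_nonneg _ hsum.summable]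
  · exact tsum_congr fun n => (ENNReal.ofReal_mul (h.2.1 n)).symm
  · intro n
    have := h.mul_pow_le hz n
    have e : q n * ((z - z ^ n) * x ^ (-α - 1)) = (q n * z - q n * z ^ n) * x ^ (-α - 1) := by ring
    rw [e]
    exact mul_nonneg (by linarith) hw

lemma IsTreeSizeDist.term_nonneg (h : IsTreeSizeDist Φ q) (α : ℝ) (n : ℕ) :
    0 ≤ q n * powPrimitive α n := by
  rcases Nat.eq_zero_or_pos n with rfl | hn
  · simp [h.1]
  · exact mul_nonneg (h.2.1 n) (powPrimitive_nonneg α hn)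

lemma IsTreeSizeDist.lintegral_sizeIntegrand (h : IsTreeSizeDist Φ q) {α : ℝ} (hα : α < 1) :
    ∫⁻ x in Ioi (0:ℝ), sizeIntegrand q α x =
      ENNReal.ofReal (Real.Gamma (1 - α)) * ∑' n, ENNReal.ofReal (q n * powPrimitive α n) := by
  have hG : 0 < Real.Gamma (1 - α) := Real.Gamma_pos_of_pos (by linarith)
  unfold sizeIntegrand
  rw [lintegral_tsum (fun n => by fun_prop), ← ENNReal.tsum_mul_left]
  refine tsum_congr fun n => ?_
  rw [lintegral_const_mul _ (by fun_prop)]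
  rcases Nat.eq_zero_or_pos n with rfl | hn
  · simp [h.1]
  · rw [lintegral_exp_sub_exp_mul_rpow hα hn, ← ENNReal.ofReal_mul (h.2.1 n),
      ← ENNReal.ofReal_mul hG.le]
    congr 1
    ring

/-- A pgf on `[0, 1]` above that of binary trees and such that `t ↦ t / Φ t` is monotone. -/
structure IsAdmissible (Φ : ℝ → ℝ) : Prop where
  binary_le : ∀ t ∈ Ioo (0:ℝ) 1, ((1 + t) / 2) ^ 2 ≤ Φ t
  zero_pos : 0 < Φ 0
  star : ∀ s t : ℝ, 0 < s → s ≤ t → t < 1 → s * Φ t ≤ t * Φ s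

lemma IsTreeSizeDist.treeGF_mem_Ioo (h : IsTreeSizeDist Φ q) (hΦ : IsAdmissible Φ) {z : ℝ}
    (hz : z ∈ Ioo (0:ℝ) 1) : treeGF q z ∈ Ioo (0:ℝ) 1 := by
  have hz' := Ioo_subset_Icc_self hz
  refine ⟨?_, (h.treeGF_le hz').trans_lt hz.2⟩
  refine (h.treeGF_nonneg hz').lt_of_ne fun h0 => ?_
  have := h.treeGF_eq hz'
  rw [← h0] at this
  have := mul_pos hz.1 hΦ.zero_pos
  linarith

lemma IsTreeSizeDist.one_sub_treeGF_sq_le (h : IsTreeSizeDist Φ q) (hΦ : IsAdmissible Φ) {z : ℝ}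
    (hz : z ∈ Ioo (0:ℝ) 1) : (1 - treeGF q z) ^ 2 ≤ 4 * (1 - z) := by
  have hz' := Ioo_subset_Icc_self hz
  have hy := h.treeGF_mem_Ioo hΦ hz
  have hle := h.treeGF_le hz'
  have heq := h.treeGF_eq hz'
  have hb := hΦ.binary_le _ hy
  set y := treeGF q z
  have h1 : z * ((1 + y) / 2) ^ 2 ≤ y := by
    linarith [mul_le_mul_of_nonneg_left hb hz.1.le]
  have h2 : z * (1 - y) ^ 2 ≤ z * (4 * (1 - z)) := by
    nlinarith [mul_le_mul_of_nonneg_right hle (by linarith [hz.2] : 0 ≤ 1 - z)]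
  exact le_of_mul_le_mul_left h2 hz.1

lemma IsTreeSizeDist.sizeIntegrand_le (h : IsTreeSizeDist Φ q) (hΦ : IsAdmissible Φ) (α : ℝ)
    {x : ℝ} (hx : 0 < x) :
    sizeIntegrand q α x ≤
      ENNReal.ofReal (2 * (Real.exp (-x) * x ^ ((1 / 2 - α) - 1))) := by
  rw [h.sizeIntegrand_eq α hx]
  apply ENNReal.ofReal_le_ofReal
  have hz : Real.exp (-x) ∈ Ioo (0:ℝ) 1 := ⟨Real.exp_pos _, Real.exp_lt_one_iff.2 (by linarith)⟩
  have hz' := Ioo_subset_Icc_self hz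
  have hxz : 1 - Real.exp (-x) ≤ x := by linarith [Real.add_one_le_exp (-x)]
  have hy := h.treeGF_mem_Ioo hΦ hz
  have heq := h.treeGF_eq hz'
  have hsq := h.one_sub_treeGF_sq_le hΦ hz
  have hb := hΦ.binary_le _ hy
  set z := Real.exp (-x)
  set y := treeGF q z
  have h1 : 1 - y ≤ 2 * x ^ (1 / 2 : ℝ) := by
    rw [← Real.sqrt_eq_rpow]
    have : Real.sqrt ((1 - y) ^ 2) ≤ Real.sqrt (2 ^ 2 * x) := Real.sqrt_le_sqrt (by linarith)
    rwa [Real.sqrt_sq (by linarith [hy.2]), Real.sqrt_mul (by positivity),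
      Real.sqrt_sq (by norm_num)] at this
  have h2 : y ≤ Φ y := by nlinarith [sq_nonneg (1 - y)]
  have h3 : z - y ≤ z * (2 * x ^ (1 / 2 : ℝ)) := by
    calc z - y = z * (1 - Φ y) := by rw [mul_sub, ← heq]; ring
      _ ≤ _ := mul_le_mul_of_nonneg_left (by linarith) hz.1.le
  have e : x ^ ((1 / 2 - α) - 1) = x ^ (1 / 2 : ℝ) * x ^ (-α - 1) := by
    rw [← Real.rpow_add hx]
    congr 1
    ring
  rw [e]
  calc (z - y) * x ^ (-α - 1) ≤ z * (2 * x ^ (1 / 2 : ℝ)) * x ^ (-α - 1) :=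
        mul_le_mul_of_nonneg_right h3 (Real.rpow_nonneg hx.le _)
    _ = _ := by ring

lemma IsTreeSizeDist.lintegral_sizeIntegrand_ne_top (h : IsTreeSizeDist Φ q)
    (hΦ : IsAdmissible Φ) {α : ℝ} (hα : α < 1 / 2) :
    ∫⁻ x in Ioi (0:ℝ), sizeIntegrand q α x ≠ ⊤ := by
  have hint := (Real.GammaIntegral_convergent (s := 1 / 2 - α) (by linarith)).const_mul 2
  refine ne_top_of_le_ne_top hint.lintegral_lt_top.ne ?_
  exact setLIntegral_mono' measurableSet_Ioi fun x hx => h.sizeIntegrand_le hΦ α hx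

lemma IsTreeSizeDist.summable_powPrimitive (h : IsTreeSizeDist Φ q) (hΦ : IsAdmissible Φ) {α : ℝ}
    (hα : α < 1 / 2) : Summable fun n => q n * powPrimitive α n := by
  have h1 := h.lintegral_sizeIntegrand_ne_top hΦ hα
  have hG : 0 < Real.Gamma (1 - α) := Real.Gamma_pos_of_pos (by linarith)
  rw [h.lintegral_sizeIntegrand (by linarith)] at h1
  have h2 : ∑' n, ENNReal.ofReal (q n * powPrimitive α n) ≠ ⊤ := by
    intro ht
    rw [ht, ENNReal.mul_top] at h1
    · exact h1 rfl
    · simpa using hG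
  refine (ENNReal.summable_toReal h2).congr fun n => ?_
  exact ENNReal.toReal_ofReal (h.term_nonneg α n)

lemma treeGF_lt_treeGF (hp : IsTreeSizeDist Φ p) (hq : IsTreeSizeDist Ψ q)
    (hΦ : IsAdmissible Φ) (hΨ : IsAdmissible Ψ) (hlt : ∀ t ∈ Ioo (0:ℝ) 1, Φ t < Ψ t) {z : ℝ}
    (hz : z ∈ Ioo (0:ℝ) 1) : treeGF p z < treeGF q z := by
  have hz' := Ioo_subset_Icc_self hz
  have hy := hp.treeGF_mem_Ioo hΦ hz
  have hw := hq.treeGF_mem_Ioo hΨ hz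
  have ey := hp.treeGF_eq hz'
  have ew := hq.treeGF_eq hz'
  set y := treeGF p z
  set w := treeGF q z
  by_contra! hle
  have h1 := hΦ.star w y hw.1 hle hy.2
  have h2 : w * Φ y < y * Ψ w := h1.trans_lt (mul_lt_mul_of_pos_left (hlt w hw) hy.1)
  have h3 : z * (w * Φ y) < z * (y * Ψ w) := mul_lt_mul_of_pos_left h2 hz.1
  have h4 : z * (w * Φ y) = w * y := by rw [mul_left_comm, ← ey]
  have h5 : z * (y * Ψ w) = y * w := by rw [mul_left_comm, ← ew]
  rw [h4, h5, mul_comm] at h3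
  exact lt_irrefl _ h3

lemma tsum_powPrimitive_lt (hp : IsTreeSizeDist Φ p) (hq : IsTreeSizeDist Ψ q)
    (hΦ : IsAdmissible Φ) (hΨ : IsAdmissible Ψ) (hlt : ∀ t ∈ Ioo (0:ℝ) 1, Φ t < Ψ t) {α : ℝ}
    (hα : α < 1 / 2) :
    ∑' n, q n * powPrimitive α n < ∑' n, p n * powPrimitive α n := by
  have hG : 0 < Real.Gamma (1 - α) := Real.Gamma_pos_of_pos (by linarith)
  have key : ∫⁻ x in Ioi (0:ℝ), sizeIntegrand q α x < ∫⁻ x in Ioi (0:ℝ), sizeIntegrand p α x := by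
    apply lintegral_strict_mono
    · simp
    · exact (measurable_sizeIntegrand p α).aemeasurable
    · exact hq.lintegral_sizeIntegrand_ne_top hΨ hα
    · filter_upwards [self_mem_ae_restrict measurableSet_Ioi] with x hx
      have hx0 : 0 < x := hx
      have hz : Real.exp (-x) ∈ Ioo (0:ℝ) 1 := ⟨Real.exp_pos _, Real.exp_lt_one_iff.2 (by linarith)⟩
      have h1 := treeGF_lt_treeGF hp hq hΦ hΨ hlt hz
      have h2 := hq.treeGF_le (Ioo_subset_Icc_self hz)
      have hw : 0 < x ^ (-α - 1) := Real.rpow_pos_of_pos hx0 _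
      rw [hq.sizeIntegrand_eq α hx0, hp.sizeIntegrand_eq α hx0]
      rw [ENNReal.ofReal_lt_ofReal_iff (mul_pos (by linarith) hw)]
      exact mul_lt_mul_of_pos_right (by linarith) hw
  rw [hp.lintegral_sizeIntegrand (by linarith), hq.lintegral_sizeIntegrand (by linarith),
    ← ENNReal.ofReal_tsum_of_nonneg (hp.term_nonneg α) (hp.summable_powPrimitive hΦ hα),
    ← ENNReal.ofReal_tsum_of_nonneg (hq.term_nonneg α) (hq.summable_powPrimitive hΨ hα),
    ← ENNReal.ofReal_mul hG.le, ← ENNReal.ofReal_mul hG.le] at key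
  exact lt_of_mul_lt_mul_left (ENNReal.ofReal_lt_ofReal_iff'.1 key).1 hG.le

lemma IsTreeSizeDist.muLog_eq (h : IsTreeSizeDist Φ q) :
    muLog q = ∑' n, q n * powPrimitive 0 n := by
  refine tsum_congr fun n => ?_
  rcases Nat.eq_zero_or_pos n with rfl | hn
  · simp [h.1]
  · rw [powPrimitive_zero hn]

lemma IsTreeSizeDist.muPow_eq (h : IsTreeSizeDist Φ q) (hΦ : IsAdmissible Φ) {α : ℝ}
    (hα : α < 1 / 2) (hα0 : α ≠ 0) : muPow q α = 1 + α * ∑' n, q n * powPrimitive α n := by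
  have hs := (h.summable.hasSum.add ((h.summable_powPrimitive hΦ hα).hasSum.mul_left α))
  rw [h.2.2.1] at hs
  rw [muPow, ← hs.tsum_eq]
  refine tsum_congr fun n => ?_
  rcases Nat.eq_zero_or_pos n with rfl | hn
  · simp [h.1]
  · rw [powPrimitive_of_ne_zero hα0 hn]
    field_simp
    ring

lemma muLog_lt_muLog (hp : IsTreeSizeDist Φ p) (hq : IsTreeSizeDist Ψ q)
    (hΦ : IsAdmissible Φ) (hΨ : IsAdmissible Ψ) (hlt : ∀ t ∈ Ioo (0:ℝ) 1, Φ t < Ψ t) :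
    muLog q < muLog p := by
  rw [hp.muLog_eq, hq.muLog_eq]
  exact tsum_powPrimitive_lt hp hq hΦ hΨ hlt (by norm_num)

lemma muPow_lt_muPow_of_neg (hp : IsTreeSizeDist Φ p) (hq : IsTreeSizeDist Ψ q)
    (hΦ : IsAdmissible Φ) (hΨ : IsAdmissible Ψ) (hlt : ∀ t ∈ Ioo (0:ℝ) 1, Φ t < Ψ t) {α : ℝ}
    (hα : α < 0) : muPow p α < muPow q α := by
  have h := tsum_powPrimitive_lt hp hq hΦ hΨ hlt (α := α) (by linarith)
  rw [hp.muPow_eq hΦ (by linarith) hα.ne, hq.muPow_eq hΨ (by linarith) hα.ne]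
  linarith [mul_lt_mul_of_neg_left h hα]

lemma muPow_lt_muPow_of_pos (hp : IsTreeSizeDist Φ p) (hq : IsTreeSizeDist Ψ q)
    (hΦ : IsAdmissible Φ) (hΨ : IsAdmissible Ψ) (hlt : ∀ t ∈ Ioo (0:ℝ) 1, Φ t < Ψ t) {α : ℝ}
    (hα : 0 < α) (hα' : α < 1 / 2) : muPow q α < muPow p α := by
  have h := tsum_powPrimitive_lt hp hq hΦ hΨ hlt hα'
  rw [hp.muPow_eq hΦ hα' hα.ne', hq.muPow_eq hΨ hα' hα.ne']
  linarith [mul_lt_mul_of_pos_left h hα]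

end TreeSize

lemma star_of_convexOn {Φ : ℝ → ℝ} (hc : ConvexOn ℝ (Icc 0 1) Φ) (h1 : Φ 1 = 1)
    (hle : ∀ t ∈ Ioo (0:ℝ) 1, t ≤ Φ t) (s t : ℝ) (hs : 0 < s) (hst : s ≤ t) (ht : t < 1) :
    s * Φ t ≤ t * Φ s := by
  have hs1 : 0 < 1 - s := by linarith
  have h := hc.2 (show s ∈ Icc (0:ℝ) 1 from ⟨hs.le, by linarith⟩)
    (show (1:ℝ) ∈ Icc (0:ℝ) 1 from ⟨zero_le_one, le_rfl⟩)
    (show 0 ≤ (1 - t) / (1 - s) from div_nonneg (by linarith) hs1.le)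
    (show 0 ≤ (t - s) / (1 - s) from div_nonneg (by linarith) hs1.le) (by field_simp; ring)
  have e : ((1 - t) / (1 - s)) • s + ((t - s) / (1 - s)) • (1:ℝ) = t := by
    simp only [smul_eq_mul]
    field_simp
    ring
  rw [e, h1] at h
  simp only [smul_eq_mul, mul_one] at h
  have h2 : (1 - s) * Φ t ≤ (1 - t) * Φ s + (t - s) := by
    calc (1 - s) * Φ t ≤ (1 - s) * ((1 - t) / (1 - s) * Φ s + (t - s) / (1 - s)) :=
          mul_le_mul_of_nonneg_left h hs1.le
      _ = _ := by field_simp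
  have h3 := hle s ⟨hs, by linarith⟩
  have h4 : (1 - s) * (s * Φ t) ≤ (1 - s) * (t * Φ s) := by
    nlinarith [mul_le_mul_of_nonneg_left h2 hs.le,
      mul_le_mul_of_nonneg_left h3 (by linarith : 0 ≤ t - s)]
  exact le_of_mul_le_mul_left h4 hs1

lemma isAdmissible_of_convexOn {Φ : ℝ → ℝ} (hc : ConvexOn ℝ (Icc 0 1) Φ) (h1 : Φ 1 = 1)
    (h0 : 0 < Φ 0) (hb : ∀ t ∈ Ioo (0:ℝ) 1, ((1 + t) / 2) ^ 2 ≤ Φ t) : IsAdmissible Φ :=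
  ⟨hb, h0, star_of_convexOn hc h1 fun t ht => by nlinarith [hb t ht, sq_nonneg (1 - t)]⟩

lemma one_add_div_lt_rpow {m n : ℕ} (hm : 0 < m) (hmn : m < n) {s : ℝ} (hs : -1 ≤ s)
    (hs0 : s ≠ 0) : (1 + (n : ℝ) / m * s) < (1 + s) ^ ((n : ℝ) / m) := by
  have hm' : (0:ℝ) < m := by exact_mod_cast hm
  apply one_add_mul_self_lt_rpow_one_add hs hs0
  rw [one_lt_div hm']
  exact_mod_cast hmn

lemma mary_lt {m n : ℕ} (hm : 1 ≤ m) (hmn : m < n) {t : ℝ} (ht : t ∈ Ioo (0:ℝ) 1) :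
    (((m : ℝ) - 1 + t) / m) ^ m < (((n : ℝ) - 1 + t) / n) ^ n := by
  have hm' : (1:ℝ) ≤ m := by exact_mod_cast hm
  have hn' : (m:ℝ) < n := by exact_mod_cast hmn
  have hn0 : (0:ℝ) < n := by linarith
  have hs : -1 ≤ (t - 1) / n := by
    rw [le_div_iff₀ hn0]
    linarith [ht.1]
  have h := one_add_div_lt_rpow hm hmn hs (div_ne_zero (by linarith [ht.2]) hn0.ne')
  have e1 : 1 + (n : ℝ) / m * ((t - 1) / n) = ((m : ℝ) - 1 + t) / m := by field_simp; ring
  have e2 : 1 + (t - 1) / n = ((n : ℝ) - 1 + t) / n := by field_simp; ring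
  rw [e1, e2] at h
  have hnn : 0 ≤ ((n : ℝ) - 1 + t) / n := div_nonneg (by linarith [ht.1]) hn0.le
  calc (((m : ℝ) - 1 + t) / m) ^ m < ((((n : ℝ) - 1 + t) / n) ^ ((n : ℝ) / m)) ^ m :=
        pow_lt_pow_left₀ h (div_nonneg (by linarith [ht.1]) (by linarith)) (by omega)
    _ = _ := by
        rw [← Real.rpow_natCast, ← Real.rpow_mul hnn, div_mul_cancel₀ _ (by linarith),
          Real.rpow_natCast]

lemma mary_lt_exp {m : ℕ} (hm : 1 ≤ m) {t : ℝ} (ht : t ∈ Ioo (0:ℝ) 1) :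
    (((m : ℝ) - 1 + t) / m) ^ m < Real.exp (t - 1) := by
  have hm' : (1:ℝ) ≤ m := by exact_mod_cast hm
  have hm0 : (0:ℝ) < m := by linarith
  have h := Real.add_one_lt_exp (x := (t - 1) / m) (div_ne_zero (by linarith [ht.2]) hm0.ne')
  have e : (t - 1) / m + 1 = ((m : ℝ) - 1 + t) / m := by field_simp; ring
  rw [e] at h
  calc (((m : ℝ) - 1 + t) / m) ^ m < Real.exp ((t - 1) / m) ^ m :=
        pow_lt_pow_left₀ h (div_nonneg (by linarith [ht.1]) hm0.le) (by omega)
    _ = _ := by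
        rw [← Real.exp_nat_mul]
        congr 1
        field_simp

lemma exp_lt_fullBinary {t : ℝ} (ht : t ∈ Ioo (0:ℝ) 1) : Real.exp (t - 1) < (1 + t ^ 2) / 2 := by
  have hu : 0 < 1 - t := by linarith [ht.2]
  have h := Real.quadratic_le_exp_of_nonneg hu.le
  have e : Real.exp (t - 1) * Real.exp (1 - t) = 1 := by
    rw [← Real.exp_add]
    simp
  have hp := Real.exp_pos (t - 1)
  have h4 : 0 < (1 - t) ^ 4 := by positivity
  have h1 : (1 + t ^ 2) / 2 * (1 + (1 - t) + (1 - t) ^ 2 / 2) = 1 + (1 - t) ^ 4 / 4 := by ring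
  by_contra! hle
  have h2 : (1 + t ^ 2) / 2 * (1 + (1 - t) + (1 - t) ^ 2 / 2) ≤
      Real.exp (t - 1) * Real.exp (1 - t) :=
    mul_le_mul hle h (by positivity) hp.le
  linarith

lemma fullBinary_lt_ordered {t : ℝ} (ht : t ∈ Ioo (0:ℝ) 1) : (1 + t ^ 2) / 2 < 1 / (2 - t) := by
  rw [lt_div_iff₀ (by linarith [ht.2])]
  have : 0 < t * (1 - t) ^ 2 := mul_pos ht.1 (pow_pos (by linarith [ht.2]) 2)
  linarith

lemma ordered_lt_fullTernary {t : ℝ} (ht : t ∈ Ioo (0:ℝ) 1) :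
    1 / (2 - t) < (((3 : ℕ) : ℝ) - 1 + t ^ 3) / ((3 : ℕ) : ℝ) := by
  push_cast
  rw [div_lt_iff₀ (by linarith [ht.2])]
  have : 0 < (1 + t) * (1 - t) ^ 3 :=
    mul_pos (by linarith [ht.1]) (pow_pos (by linarith [ht.2]) 3)
  linarith

lemma fullMary_lt {m n : ℕ} (hm : 1 ≤ m) (hmn : m < n) {t : ℝ} (ht : t ∈ Ioo (0:ℝ) 1) :
    ((m : ℝ) - 1 + t ^ m) / m < ((n : ℝ) - 1 + t ^ n) / n := by
  have hm0 : (0:ℝ) < m := by exact_mod_cast hm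
  have hn0 : (0:ℝ) < n := by exact_mod_cast hm.trans hmn.le
  have htm : t ^ m < 1 := pow_lt_one₀ ht.1.le ht.2 (by omega)
  have htp : 0 < t ^ m := pow_pos ht.1 m
  have h := one_add_div_lt_rpow hm hmn (s := t ^ m - 1) (by linarith) (by linarith)
  have e : (1 + (t ^ m - 1)) ^ ((n : ℝ) / m) = t ^ n := by
    rw [add_sub_cancel, ← Real.rpow_natCast t m, ← Real.rpow_mul ht.1.le,
      mul_div_cancel₀ _ hm0.ne', Real.rpow_natCast]
  rw [e] at h
  rw [div_lt_div_iff₀ hm0 hn0]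
  have h2 := mul_lt_mul_of_pos_right h hm0
  have e2 : (1 + (n : ℝ) / m * (t ^ m - 1)) * m = m + n * (t ^ m - 1) := by field_simp
  rw [e2] at h2
  linarith

lemma binary_le_mary {m : ℕ} (hm : 2 ≤ m) {t : ℝ} (ht : t ∈ Ioo (0:ℝ) 1) :
    ((1 + t) / 2) ^ 2 ≤ (((m : ℝ) - 1 + t) / m) ^ m := by
  rcases hm.eq_or_lt with rfl | h
  · apply le_of_eq
    norm_num
  · have := mary_lt (by norm_num) h ht
    norm_num at this
    exact this.le

lemma isAdmissible_mary {m : ℕ} (hm : 2 ≤ m) :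
    IsAdmissible fun t => (((m : ℝ) - 1 + t) / m) ^ m := by
  have hm' : (2:ℝ) ≤ m := by exact_mod_cast hm
  refine isAdmissible_of_convexOn ?_ ?_ ?_ fun t ht => binary_le_mary hm ht
  · refine ConvexOn.pow ?_ ?_ m
    · refine ⟨convex_Icc _ _, fun x _ y _ a b _ _ hab => le_of_eq ?_⟩
      simp only [smul_eq_mul]
      field_simp
      linear_combination (1 - (m : ℝ)) * hab
    · intro x hx
      exact div_nonneg (by linarith [hx.1]) (by linarith)
  · simp only [sub_add_cancel]
    rw [div_self (by linarith), one_pow]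
  · exact pow_pos (div_pos (by linarith) (by linarith)) m

lemma binary_lt_exp {t : ℝ} (ht : t ∈ Ioo (0:ℝ) 1) : ((1 + t) / 2) ^ 2 < Real.exp (t - 1) :=
  (binary_le_mary le_rfl ht).trans_lt (mary_lt_exp (by norm_num) ht)

lemma isAdmissible_exp : IsAdmissible fun t => Real.exp (t - 1) := by
  refine isAdmissible_of_convexOn ?_ (by simp) (Real.exp_pos _) fun t ht => (binary_lt_exp ht).le
  have h : (fun t => Real.exp (t - 1)) = fun t => Real.exp (-1) • Real.exp t := by
    funext t
    rw [smul_eq_mul, ← Real.exp_add]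
    congr 1
    ring
  rw [h]
  exact (convexOn_exp.subset (subset_univ _) (convex_Icc _ _)).smul (Real.exp_pos _).le

lemma isAdmissible_fullBinary : IsAdmissible fun t => (1 + t ^ 2) / 2 where
  binary_le t _ := by nlinarith [sq_nonneg (1 - t)]
  zero_pos := by norm_num
  star s t hs hst ht := by
    nlinarith [mul_nonneg (sub_nonneg.2 hst) (by nlinarith : 0 ≤ 1 - s * t)]

lemma isAdmissible_ordered : IsAdmissible fun t => 1 / (2 - t) where
  binary_le t ht :=
    (isAdmissible_fullBinary.binary_le t ht).trans (fullBinary_lt_ordered ht).le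
  zero_pos := by norm_num
  star s t hs hst ht := by
    rw [mul_one_div, mul_one_div, div_le_div_iff₀ (by linarith) (by linarith)]
    nlinarith

lemma isAdmissible_fullMary {m : ℕ} (hm : 3 ≤ m) :
    IsAdmissible fun t => ((m : ℝ) - 1 + t ^ m) / m := by
  have hm' : (3:ℝ) ≤ m := by exact_mod_cast hm
  refine isAdmissible_of_convexOn ?_ ?_ ?_ fun t ht => ?_
  · have h : (fun t : ℝ => ((m : ℝ) - 1 + t ^ m) / m) =
        fun t => (1 / (m : ℝ)) • (t ^ m + ((m : ℝ) - 1)) := by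
      funext t
      rw [smul_eq_mul]
      ring
    rw [h]
    refine ConvexOn.smul (by positivity) ?_
    exact ((convexOn_pow m).subset Icc_subset_Ici_self (convex_Icc _ _)).add_const _
  · simp only [one_pow, sub_add_cancel]
    exact div_self (by linarith)
  · rw [zero_pow (by omega)]
    exact div_pos (by linarith) (by linarith)
  · refine (isAdmissible_fullBinary.binary_le t ht).trans ?_
    have := fullMary_lt (m := 2) (by norm_num) hm ht
    norm_num at this
    exact this.le

/-- Theorem 6.13 of the paper. Orderings of `μ(α)` and `μ'` across the
standard models: `m`-ary trees (`Φ_{1,m}`), labelled trees (`Φ₂`), full binary trees (`Φ₃`),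
ordered trees (`Φ₄`), and full `m`-ary trees (`Φ_{5,m}`). -/
theorem stmt13
    (q1 : ℕ → ℕ → ℝ) (q2 q3 q4 : ℕ → ℝ) (q5 : ℕ → ℕ → ℝ)
    (h1 : ∀ m : ℕ, 2 ≤ m →
      IsTreeSizeDist (fun t => (((m : ℝ) - 1 + t) / m) ^ m) (q1 m))
    (h2 : IsTreeSizeDist (fun t => Real.exp (t - 1)) q2)
    (h3 : IsTreeSizeDist (fun t => (1 + t ^ 2) / 2) q3)
    (h4 : IsTreeSizeDist (fun t => 1 / (2 - t)) q4)
    (h5 : ∀ m : ℕ, 3 ≤ m →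
      IsTreeSizeDist (fun t => ((m : ℝ) - 1 + t ^ m) / m) (q5 m)) :
    (∀ α : ℝ, α < 0 →
      (∀ m n : ℕ, 2 ≤ m → m < n → muPow (q1 m) α < muPow (q1 n) α) ∧
      (∀ m n : ℕ, 3 ≤ m → m < n → muPow (q5 m) α < muPow (q5 n) α) ∧
      (∀ m : ℕ, 2 ≤ m → muPow (q1 m) α < muPow q2 α) ∧
      muPow q2 α < muPow q3 α ∧ muPow q3 α < muPow q4 α ∧
      muPow q4 α < muPow (q5 3) α) ∧
    (∀ α : ℝ, 0 < α → α < 1/2 →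
      (∀ m n : ℕ, 2 ≤ m → m < n → muPow (q1 n) α < muPow (q1 m) α) ∧
      (∀ m n : ℕ, 3 ≤ m → m < n → muPow (q5 n) α < muPow (q5 m) α) ∧
      (∀ m : ℕ, 2 ≤ m → muPow q2 α < muPow (q1 m) α) ∧
      muPow q3 α < muPow q2 α ∧ muPow q4 α < muPow q3 α ∧
      muPow (q5 3) α < muPow q4 α) ∧
    ((∀ m n : ℕ, 2 ≤ m → m < n → muLog (q1 n) < muLog (q1 m)) ∧
      (∀ m n : ℕ, 3 ≤ m → m < n → muLog (q5 n) < muLog (q5 m)) ∧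
      (∀ m : ℕ, 2 ≤ m → muLog q2 < muLog (q1 m)) ∧
      muLog q3 < muLog q2 ∧ muLog q4 < muLog q3 ∧
      muLog (q5 3) < muLog q4) := by
  have a1 := fun m (hm : 2 ≤ m) => isAdmissible_mary hm
  have a2 := isAdmissible_exp
  have a3 := isAdmissible_fullBinary
  have a4 := isAdmissible_ordered
  have a5 := fun m (hm : 3 ≤ m) => isAdmissible_fullMary hm
  refine ⟨fun α hα => ?_, fun α hα hα' => ?_, ?_⟩
  · exact ⟨fun m n hm hmn => muPow_lt_muPow_of_neg (h1 m hm) (h1 n (hm.trans hmn.le)) (a1 m hm)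
        (a1 n (hm.trans hmn.le)) (fun t ht => mary_lt (by omega) hmn ht) hα,
      fun m n hm hmn => muPow_lt_muPow_of_neg (h5 m hm) (h5 n (hm.trans hmn.le)) (a5 m hm)
        (a5 n (hm.trans hmn.le)) (fun t ht => fullMary_lt (by omega) hmn ht) hα,
      fun m hm => muPow_lt_muPow_of_neg (h1 m hm) h2 (a1 m hm) a2
        (fun t ht => mary_lt_exp (by omega) ht) hα,
      muPow_lt_muPow_of_neg h2 h3 a2 a3 (fun t ht => exp_lt_fullBinary ht) hα,
      muPow_lt_muPow_of_neg h3 h4 a3 a4 (fun t ht => fullBinary_lt_ordered ht) hα,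
      muPow_lt_muPow_of_neg h4 (h5 3 le_rfl) a4 (a5 3 le_rfl)
        (fun t ht => ordered_lt_fullTernary ht) hα⟩
  · exact ⟨fun m n hm hmn => muPow_lt_muPow_of_pos (h1 m hm) (h1 n (hm.trans hmn.le)) (a1 m hm)
        (a1 n (hm.trans hmn.le)) (fun t ht => mary_lt (by omega) hmn ht) hα hα',
      fun m n hm hmn => muPow_lt_muPow_of_pos (h5 m hm) (h5 n (hm.trans hmn.le)) (a5 m hm)
        (a5 n (hm.trans hmn.le)) (fun t ht => fullMary_lt (by omega) hmn ht) hα hα',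
      fun m hm => muPow_lt_muPow_of_pos (h1 m hm) h2 (a1 m hm) a2
        (fun t ht => mary_lt_exp (by omega) ht) hα hα',
      muPow_lt_muPow_of_pos h2 h3 a2 a3 (fun t ht => exp_lt_fullBinary ht) hα hα',
      muPow_lt_muPow_of_pos h3 h4 a3 a4 (fun t ht => fullBinary_lt_ordered ht) hα hα',
      muPow_lt_muPow_of_pos h4 (h5 3 le_rfl) a4 (a5 3 le_rfl)
        (fun t ht => ordered_lt_fullTernary ht) hα hα'⟩
  · exact ⟨fun m n hm hmn => muLog_lt_muLog (h1 m hm) (h1 n (hm.trans hmn.le)) (a1 m hm)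
        (a1 n (hm.trans hmn.le)) (fun t ht => mary_lt (by omega) hmn ht),
      fun m n hm hmn => muLog_lt_muLog (h5 m hm) (h5 n (hm.trans hmn.le)) (a5 m hm)
        (a5 n (hm.trans hmn.le)) (fun t ht => fullMary_lt (by omega) hmn ht),
      fun m hm => muLog_lt_muLog (h1 m hm) h2 (a1 m hm) a2
        (fun t ht => mary_lt_exp (by omega) ht),
      muLog_lt_muLog h2 h3 a2 a3 (fun t ht => exp_lt_fullBinary ht),
      muLog_lt_muLog h3 h4 a3 a4 (fun t ht => fullBinary_lt_ordered ht),
      muLog_lt_muLog h4 (h5 3 le_rfl) a4 (a5 3 le_rfl)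
        (fun t ht => ordered_lt_fullTernary ht)⟩
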